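/- There exist trees requiring Ω(√n) colours to be subset square coloured: for every integer d ≥ 2 there exists a tree T on n = d² + d + 1 vertices with χ_ssc(T) ≥ d, and hence with χ_ssc(T) ≥ √n − 1. -/

import Mathlib

open SimpleGraph

/-- The closed neighbourhood of `v` in `G`. -/
def closedNbhd {V : Type*} (G : SimpleGraph V) (v : V) : Set V :=
  {u | u = v ∨ G.Adj v u}

/-- `c` is a `q`-subset square colouring of `G`: colours `1, …, q` are real colours and
colour `0` means "uncoloured"; every closed neighbourhood contains a coloured vertex, and
no nonzero colour appears on two distinct vertices of a closed neighbourhood. -/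
def IsSubsetSquareColouring {V : Type*} (G : SimpleGraph V) (q : ℕ) (c : V → ℕ) : Prop :=
  (∀ v, c v ≤ q) ∧
  (∀ v, ∃ u ∈ closedNbhd G v, c u ≠ 0) ∧
  (∀ v i, 1 ≤ i → i ≤ q →
    ∀ u ∈ closedNbhd G v, ∀ w ∈ closedNbhd G v, c u = i → c w = i → u = w)

/-- The subset square chromatic number `χ_ssc G`. -/
noncomputable def sscNum {V : Type*} (G : SimpleGraph V) : ℕ :=
  sInf {q | ∃ c : V → ℕ, IsSubsetSquareColouring G q c}

/-!
The witness is the rooted tree in which the root has `d` children and each child has `d` leaves.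
In a subset square colouring, either all children of the root are coloured, or some child is
uncoloured and then each of its leaves, having no other neighbour, must be coloured itself. Either
way some vertex has `d` coloured neighbours, and these carry pairwise distinct colours.
-/

section ParentGraph

variable {V : Type*} {p : V → V}

/-- The graph joining every vertex `v` to its parent `p v`. A root is encoded as a fixed point
of `p`, which contributes no edge. -/
def parentGraph (p : V → V) : SimpleGraph V :=
  SimpleGraph.fromRel fun u v => p u = v

theorem parentGraph_adj {u v : V} :
    (parentGraph p).Adj u v ↔ u ≠ v ∧ (p u = v ∨ p v = u) :=
  fromRel_adj _ u v

theorem parentGraph_reachable_parent (v : V) : (parentGraph p).Reachable v (p v) := by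
  by_cases hv : v = p v
  · rw [← hv]
  · exact (parentGraph_adj.2 ⟨hv, Or.inl rfl⟩).reachable

theorem parentGraph_reachable_iterate (n : ℕ) (v : V) :
    (parentGraph p).Reachable v (p^[n] v) := by
  induction n generalizing v with
  | zero => rfl
  | succ n ih => exact (parentGraph_reachable_parent v).trans (ih (p v))

theorem parentGraph_connected {r : V} (hreach : ∀ v, ∃ n, p^[n] v = r) :
    (parentGraph p).Connected := by
  refine (connected_iff_exists_forall_reachable _).2 ⟨r, fun v => ?_⟩
  obtain ⟨n, rfl⟩ := hreach v
  exact (parentGraph_reachable_iterate n v).symm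

theorem parentGraph_edgeSet_subset {r : V} (hr : p r = r) :
    (parentGraph p).edgeSet ⊆ (fun v => s(v, p v)) '' {r}ᶜ := by
  have parent_edge_mem {u v : V} (hne : u ≠ v) (huv : p u = v) :
      s(u, v) ∈ (fun v => s(v, p v)) '' {r}ᶜ := by
    refine ⟨u, ?_, congrArg (s(u, ·)) huv⟩
    rintro rfl
    exact hne (hr.symm.trans huv)
  intro e he
  induction e with
  | _ u v =>
    obtain ⟨hne, huv | hvu⟩ := parentGraph_adj.1 he
    · exact parent_edge_mem hne huv
    · exact Sym2.eq_swap ▸ parent_edge_mem hne.symm hvu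

theorem parentGraph_isTree [Finite V] {r : V} (hr : p r = r) (hreach : ∀ v, ∃ n, p^[n] v = r) :
    (parentGraph p).IsTree := by
  have hconn : (parentGraph p).Connected := parentGraph_connected hreach
  refine isTree_iff_connected_and_card.2
    ⟨hconn, le_antisymm ?_ hconn.card_vert_le_card_edgeSet_add_one⟩
  calc (parentGraph p).edgeSet.ncard + 1
      ≤ ((fun v => s(v, p v)) '' {r}ᶜ).ncard + 1 := by
        gcongr
        · exact Set.toFinite _
        · exact parentGraph_edgeSet_subset hr
    _ ≤ ({r}ᶜ : Set V).ncard + 1 := by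
        gcongr
        exact Set.ncard_image_le
    _ = Nat.card V := by
        rw [← Set.ncard_add_ncard_compl {r}, Set.ncard_singleton, add_comm]

end ParentGraph

namespace IsSubsetSquareColouring

variable {V ι κ : Type*} {G : SimpleGraph V} {q : ℕ} {c : V → ℕ}

theorem eq_of_colour_eq (hc : IsSubsetSquareColouring G q c) {u v w : V}
    (hu : u ∈ closedNbhd G v) (hw : w ∈ closedNbhd G v) (hcu : c u ≠ 0) (huw : c u = c w) :
    u = w :=
  hc.2.2 v (c u) (Nat.one_le_iff_ne_zero.2 hcu) (hc.1 u) u hu w hw rfl huw.symm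

theorem card_le_of_forall_mem_closedNbhd [Fintype ι] (hc : IsSubsetSquareColouring G q c) {v : V}
    {f : ι → V} (hf : f.Injective) (hmem : ∀ i, f i ∈ closedNbhd G v) (hcol : ∀ i, c (f i) ≠ 0) :
    Fintype.card ι ≤ q := by
  have hmaps : Set.MapsTo (fun i => c (f i)) (Finset.univ : Finset ι) (Finset.Icc 1 q) :=
    fun i _ => Finset.mem_coe.2 (Finset.mem_Icc.2 ⟨Nat.one_le_iff_ne_zero.2 (hcol i), hc.1 (f i)⟩)
  have hinj : Function.Injective fun i => c (f i) :=
    fun i j hij => hf (hc.eq_of_colour_eq (hmem i) (hmem j) (hcol i) hij)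
  simpa using Finset.card_le_card_of_injOn _ hmaps hinj.injOn

theorem colour_ne_zero_of_neighborSet_eq_singleton (hc : IsSubsetSquareColouring G q c) {v w : V}
    (hv : G.neighborSet v = {w}) (hw : c w = 0) : c v ≠ 0 := by
  obtain ⟨u, rfl | hvu, hcu⟩ := hc.2.1 v
  · exact hcu
  · obtain rfl : u = w := hv.subset hvu
    exact absurd hw hcu

theorem min_card_children_card_leaves_le [Fintype ι] [Fintype κ]
    (hc : IsSubsetSquareColouring G q c) {r : V}
    {child : ι → V} (hchild : child.Injective) (hadj : ∀ i, G.Adj r (child i))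
    {leaf : ι → κ → V} (hleaf : ∀ i, (leaf i).Injective)
    (hpendant : ∀ i j, G.neighborSet (leaf i j) = {child i}) :
    min (Fintype.card ι) (Fintype.card κ) ≤ q := by
  by_cases hcol : ∀ i, c (child i) ≠ 0
  · exact min_le_of_left_le
      (hc.card_le_of_forall_mem_closedNbhd hchild (fun i => Or.inr (hadj i)) hcol)
  · push Not at hcol
    obtain ⟨i, hi⟩ := hcol
    have hadj_leaf (j : κ) : G.Adj (leaf i j) (child i) := (hpendant i j).superset rfl
    exact min_le_of_right_le
      (hc.card_le_of_forall_mem_closedNbhd (hleaf i) (fun j => Or.inr (hadj_leaf j).symm)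
        fun j => hc.colour_ne_zero_of_neighborSet_eq_singleton (hpendant i j) hi)

end IsSubsetSquareColouring

section SscNum

variable {V : Type*}

theorem exists_isSubsetSquareColouring [Finite V] (G : SimpleGraph V) :
    ∃ q c, IsSubsetSquareColouring G q c := by
  obtain ⟨n, ⟨e⟩⟩ := Finite.exists_equiv_fin V
  refine ⟨n, fun v => e v + 1, fun v => (e v).isLt, fun v => ⟨v, Or.inl rfl, Nat.succ_ne_zero _⟩,
    fun _ _ _ _ u _ w _ hu hw => e.injective (Fin.ext ?_)⟩
  exact Nat.succ_injective (hu.trans hw.symm)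

theorem le_sscNum [Finite V] {G : SimpleGraph V} {k : ℕ}
    (hk : ∀ q c, IsSubsetSquareColouring G q c → k ≤ q) : k ≤ sscNum G :=
  le_csInf (exists_isSubsetSquareColouring G) fun q ⟨c, hc⟩ => hk q c hc

end SscNum

section DepthTwoTree

variable {ι κ : Type*}

/-- The parent map of the depth-two tree on `Option (ι × Option κ)`: the root is `none`, its
children are `some (i, none)`, and the leaves below the `i`-th child are `some (i, some j)`. -/
def depthTwoParent : Option (ι × Option κ) → Option (ι × Option κ)
  | none => none
  | some (_, none) => none
  | some (i, some _) => some (i, none)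

/-- The rooted tree whose root has children indexed by `ι`, each of which has leaves indexed
by `κ`. -/
def depthTwoTree (ι κ : Type*) : SimpleGraph (Option (ι × Option κ)) :=
  parentGraph depthTwoParent

theorem depthTwoTree_isTree [Finite ι] [Finite κ] : (depthTwoTree ι κ).IsTree := by
  refine parentGraph_isTree (r := none) rfl fun v => ⟨2, ?_⟩
  rcases v with _ | ⟨i, _ | j⟩ <;> rfl

theorem depthTwoTree_adj_root_child (i : ι) :
    (depthTwoTree ι κ).Adj none (some (i, none)) :=
  parentGraph_adj.2 ⟨by simp, Or.inr rfl⟩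

theorem depthTwoTree_neighborSet_leaf (i : ι) (j : κ) :
    (depthTwoTree ι κ).neighborSet (some (i, some j)) = {some (i, none)} := by
  ext v
  rcases v with _ | ⟨i', _ | j'⟩ <;>
    simp [depthTwoTree, parentGraph_adj, depthTwoParent, eq_comm]

theorem min_card_le_sscNum_depthTwoTree [Fintype ι] [Fintype κ] :
    min (Fintype.card ι) (Fintype.card κ) ≤ sscNum (depthTwoTree ι κ) :=
  le_sscNum fun _ _ hc => hc.min_card_children_card_leaves_le
    (child := fun i => some (i, none)) (fun _ _ h => by simpa using h) depthTwoTree_adj_root_child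
    (leaf := fun i j => some (i, some j)) (fun _ _ _ h => by simpa using h)
    depthTwoTree_neighborSet_leaf

end DepthTwoTree

theorem sqrt_sq_add_self_add_one_le {x : ℝ} (hx : 0 ≤ x) : √(x ^ 2 + x + 1) ≤ x + 1 :=
  Real.sqrt_le_iff.2 ⟨by positivity, by linarith [add_sq x 1]⟩

theorem stmt8 (d : ℕ) (hd : 2 ≤ d) :
    ∃ (V : Type) (_ : Fintype V) (T : SimpleGraph V),
      T.Connected ∧ T.IsAcyclic ∧ Fintype.card V = d ^ 2 + d + 1 ∧
      d ≤ sscNum T ∧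
      Real.sqrt (Fintype.card V) - 1 ≤ (sscNum T : ℝ) := by
  have hcard : Fintype.card (Option (Fin d × Option (Fin d))) = d ^ 2 + d + 1 := by
    simp only [Fintype.card_option, Fintype.card_prod, Fintype.card_fin]
    ring
  have htree : (depthTwoTree (Fin d) (Fin d)).IsTree := depthTwoTree_isTree
  have hssc : d ≤ sscNum (depthTwoTree (Fin d) (Fin d)) := by
    simpa using min_card_le_sscNum_depthTwoTree (ι := Fin d) (κ := Fin d)
  refine ⟨_, inferInstance, depthTwoTree (Fin d) (Fin d), htree.connected, htree.isAcyclic, hcard,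
    hssc, ?_⟩
  calc √(Fintype.card (Option (Fin d × Option (Fin d))) : ℝ) - 1
      = √((d : ℝ) ^ 2 + d + 1) - 1 := by rw [hcard]; push_cast; rfl
    _ ≤ d := sub_le_iff_le_add.2 (sqrt_sq_add_self_add_one_le d.cast_nonneg)
    _ ≤ sscNum (depthTwoTree (Fin d) (Fin d)) := Nat.cast_le.2 hssc
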